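/- Let 𝒳 and 𝒲 be standard Borel spaces, R a probability measure on 𝒲, f : 𝒳 × 𝒲 → 𝒳 measurable with t-step transition maps F_t, and P_* a nominal invariant state distribution ((P_* × R) ∘ f⁻¹ = P_*). For t ≥ 1 and probability measures Φ, Ψ on 𝒳, define J_t(Φ, Ψ) := inf { ∫_𝒳 D(κ(x) ‖ R^{⊗t}) dΦ(x) : κ a Markov kernel from 𝒳 to 𝒲^t with κ(x) ≪ R^{⊗t} for Φ-a.e. x and (Φ ⊗ κ) ∘ F_t⁻¹ = Ψ }, valued in [0,∞]. Then for any probability measures Φ ≪ P_* and Ψ on 𝒳 and any t ≥ 1, the lower bound holds: J_t(Φ, Ψ) + D(Φ ‖ P_*) ≥ D(Ψ ‖ P_*). -/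

import Mathlib

open MeasureTheory ProbabilityTheory
open scoped ENNReal ProbabilityTheory Classical

/-- Kullback-Leibler divergence `D(P ‖ Q)`, valued in `[0,∞]`.  For probability measures with
`P ≪ Q` it equals `∫ log (dP/dQ) dP`, computed here in the equivalent nonnegative form
`∫⁻ (φ log φ - φ + 1) dQ` where `φ = dP/dQ`; it is `∞` when `¬ P ≪ Q`. -/
noncomputable def klDiv {α : Type*} [MeasurableSpace α] (P Q : Measure α) : ℝ≥0∞ :=
  if P ≪ Q then
    ∫⁻ x, ENNReal.ofReal ((P.rnDeriv Q x).toReal * Real.log (P.rnDeriv Q x).toReal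
      - (P.rnDeriv Q x).toReal + 1) ∂Q
  else ∞

/-- The `t`-step state transition maps: `F 0 (x, _) = x` and
`F (k+1) (x, w₀, …, w_k) = f (F k (x, w₀, …, w_{k-1}), w_k)`. -/
def stateTrans {𝒳 𝒲 : Type*} (f : 𝒳 × 𝒲 → 𝒳) : (t : ℕ) → 𝒳 × (Fin t → 𝒲) → 𝒳
  | 0, p => p.1
  | t + 1, p => f (stateTrans f t (p.1, fun i => p.2 i.castSucc), p.2 (Fin.last t))

/-- The minimum required conditional relative entropy supply to drive the state distribution
from `Φ` to `Ψ` under the transition map `F : 𝒳 × 𝒱 → 𝒳` (for `J_t` take `𝒱 = 𝒲^t`,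
`F = F_t` and `Rt = R^{⊗t}`): the infimum over all Markov kernels `κ` with `κ x ≪ Rt` for
`Φ`-a.e. `x` and `(Φ ⊗ κ) ∘ F⁻¹ = Ψ` of `∫ D(κ(x) ‖ Rt) dΦ(x)`, with `inf ∅ = ∞`. -/
noncomputable def reqSupply {𝒳 𝒱 : Type*} [MeasurableSpace 𝒳] [MeasurableSpace 𝒱]
    (F : 𝒳 × 𝒱 → 𝒳) (Rt : Measure 𝒱) (Φ Ψ : Measure 𝒳) : ℝ≥0∞ :=
  ⨅ (κ : Kernel 𝒳 𝒱) (_ : IsMarkovKernel κ) (_ : ∀ᵐ x ∂Φ, κ x ≪ Rt)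
    (_ : (Φ ⊗ₘ κ).map F = Ψ), ∫⁻ x, klDiv (κ x) Rt ∂Φ

lemma klDiv_eq_infoKlDiv {α : Type*} [MeasurableSpace α] (P Q : Measure α)
    [IsFiniteMeasure P] [IsFiniteMeasure Q] : klDiv P Q = InformationTheory.klDiv P Q := by
  rw [klDiv, InformationTheory.klDiv_eq_lintegral_klFun]
  have h : ∀ x : ℝ, InformationTheory.klFun x = x * Real.log x - x + 1 := fun x => by
    rw [InformationTheory.klFun_apply]; ring
  simp only [h]

lemma rnDeriv_compProd_kernel {α β : Type*} [MeasurableSpace α] [MeasurableSpace β]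
    [StandardBorelSpace β] (μ : Measure α) [IsProbabilityMeasure μ]
    (κ η : Kernel α β) [IsMarkovKernel κ] [IsMarkovKernel η] (h : ∀ᵐ x ∂μ, κ x ≪ η x) :
    (μ ⊗ₘ κ).rnDeriv (μ ⊗ₘ η) =ᵐ[μ ⊗ₘ η] fun p => κ.rnDeriv η p.1 p.2 := by
  have hm : Measurable (fun p : α × β => κ.rnDeriv η p.1 p.2) := Kernel.measurable_rnDeriv κ η
  have key : μ ⊗ₘ κ = (μ ⊗ₘ η).withDensity (fun p => κ.rnDeriv η p.1 p.2) := by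
    ext s hs
    rw [withDensity_apply _ hs, ← lintegral_indicator hs,
      Measure.lintegral_compProd (hm.indicator hs), Measure.compProd_apply hs]
    refine lintegral_congr_ae ?_
    filter_upwards [h] with x hx
    rw [← Kernel.setLIntegral_rnDeriv hx (measurable_prodMk_left hs),
      ← lintegral_indicator (measurable_prodMk_left hs)]
    rfl
  rw [key]
  exact Measure.rnDeriv_withDensity _ hm

lemma klDiv_compProd_kernel {α β : Type*} [MeasurableSpace α] [MeasurableSpace β]
    [StandardBorelSpace β] (μ : Measure α) [IsProbabilityMeasure μ]
    (κ η : Kernel α β) [IsMarkovKernel κ] [IsMarkovKernel η] (h : ∀ᵐ x ∂μ, κ x ≪ η x) :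
    InformationTheory.klDiv (μ ⊗ₘ κ) (μ ⊗ₘ η)
      = ∫⁻ x, InformationTheory.klDiv (κ x) (η x) ∂μ := by
  have hm : Measurable (fun p : α × β => κ.rnDeriv η p.1 p.2) := Kernel.measurable_rnDeriv κ η
  have hac : μ ⊗ₘ κ ≪ μ ⊗ₘ η := Measure.AbsolutelyContinuous.rfl.compProd h
  rw [InformationTheory.klDiv_eq_lintegral_klFun_of_ac hac]
  have h1 : ∫⁻ p, ENNReal.ofReal (InformationTheory.klFun
        ((μ ⊗ₘ κ).rnDeriv (μ ⊗ₘ η) p).toReal) ∂(μ ⊗ₘ η)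
      = ∫⁻ p, ENNReal.ofReal (InformationTheory.klFun
        (κ.rnDeriv η p.1 p.2).toReal) ∂(μ ⊗ₘ η) := by
    refine lintegral_congr_ae ?_
    filter_upwards [rnDeriv_compProd_kernel μ κ η h] with p hp
    rw [hp]
  have hmeas : Measurable (fun p : α × β => ENNReal.ofReal (InformationTheory.klFun
      (κ.rnDeriv η p.1 p.2).toReal)) :=
    (InformationTheory.measurable_klFun.comp hm.ennreal_toReal).ennreal_ofReal
  rw [h1, Measure.lintegral_compProd hmeas]
  refine lintegral_congr_ae ?_
  filter_upwards [h] with x hx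
  rw [InformationTheory.klDiv_eq_lintegral_klFun_of_ac hx]
  refine lintegral_congr_ae ?_
  filter_upwards [Kernel.rnDeriv_eq_rnDeriv_measure (κ := κ) (η := η) (a := x)] with y hy
  rw [hy]

lemma measurable_stateTrans {𝒳 𝒲 : Type*} [MeasurableSpace 𝒳] [MeasurableSpace 𝒲]
    (f : 𝒳 × 𝒲 → 𝒳) (hf : Measurable f) (t : ℕ) : Measurable (stateTrans f t) := by
  induction t with
  | zero => exact measurable_fst
  | succ t ih =>
    have : stateTrans f (t + 1) = fun p => f (stateTrans f t (p.1, fun i => p.2 i.castSucc),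
      p.2 (Fin.last t)) := by funext p; rfl
    rw [this]
    fun_prop

lemma map_stateTrans {𝒳 𝒲 : Type*} [MeasurableSpace 𝒳] [MeasurableSpace 𝒲]
    (R : Measure 𝒲) [IsProbabilityMeasure R]
    (f : 𝒳 × 𝒲 → 𝒳) (hf : Measurable f)
    (P : Measure 𝒳) [IsProbabilityMeasure P]
    (hinv : (P.prod R).map f = P) (t : ℕ) :
    MeasurePreserving (stateTrans f t) (P.prod (Measure.pi fun _ : Fin t => R)) P := by
  induction t with
  | zero => exact measurePreserving_fst
  | succ t ih =>
    have e1 := (measurePreserving_piFinSuccAbove (fun _ : Fin (t + 1) => R) (Fin.last t))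
    have e2 := (MeasurePreserving.id P).prod
      ((Measure.measurePreserving_swap (μ := R) (ν := Measure.pi fun _ : Fin t => R)).comp e1)
    have e3 := (measurePreserving_prodAssoc P (Measure.pi fun _ : Fin t => R) R).symm
    have e4 := ih.prod (MeasurePreserving.id R)
    have e5 : MeasurePreserving f (P.prod R) P := ⟨hf, hinv⟩
    have e := e5.comp (e4.comp (e3.comp e2))
    convert e using 1
    funext p
    simp [stateTrans, MeasurableEquiv.piFinSuccAbove, Fin.insertNthEquiv, Fin.removeNth,
      MeasurableEquiv.prodAssoc, Fin.init]
    rfl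

/-- Lower bound on the minimum required supply: `J_t(Φ, Ψ) + D(Φ ‖ P_*) ≥ D(Ψ ‖ P_*)`. -/
theorem reqSupply_lower_bound
    {𝒳 𝒲 : Type*} [MeasurableSpace 𝒳] [StandardBorelSpace 𝒳]
    [MeasurableSpace 𝒲] [StandardBorelSpace 𝒲]
    (R : Measure 𝒲) [IsProbabilityMeasure R]
    (f : 𝒳 × 𝒲 → 𝒳) (hf : Measurable f)
    (Pstar : Measure 𝒳) [IsProbabilityMeasure Pstar]
    (hinv : (Pstar.prod R).map f = Pstar)
    (t : ℕ) (ht : 1 ≤ t)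
    (Φ Ψ : Measure 𝒳) [IsProbabilityMeasure Φ] [IsProbabilityMeasure Ψ]
    (hΦ : Φ ≪ Pstar) :
    klDiv Ψ Pstar
      ≤ reqSupply (stateTrans f t) (Measure.pi fun _ : Fin t => R) Φ Ψ + klDiv Φ Pstar := by
  unfold reqSupply
  simp only [ENNReal.iInf_add]
  refine le_iInf fun κ => le_iInf fun hκ => le_iInf fun hac => le_iInf fun hmap => ?_
  have hP := map_stateTrans R f hf Pstar hinv t
  set Rt : Measure (Fin t → 𝒲) := Measure.pi fun _ : Fin t => R with hRt
  have hsum : ∫⁻ x, klDiv (κ x) Rt ∂Φ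
      = InformationTheory.klDiv (Φ ⊗ₘ κ) (Φ ⊗ₘ Kernel.const 𝒳 Rt) := by
    rw [klDiv_compProd_kernel Φ κ (Kernel.const 𝒳 Rt) (by simpa using hac)]
    simp [klDiv_eq_infoKlDiv]
  rw [hsum, klDiv_eq_infoKlDiv, klDiv_eq_infoKlDiv, add_comm,
    ← InformationTheory.klDiv_compProd_eq_add, Measure.compProd_const]
  have := InformationTheory.klDiv_map_le (Φ ⊗ₘ κ) (Pstar.prod Rt) hP.measurable
  rwa [hmap, hP.map_eq] at this
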